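/- arXiv:1305.1511 — 2 statements merged into one kernel-verified Lean document; each statement's English description precedes it below -/
import Mathlib

section
/- Let (V, φ, ξ, η, g) be an almost paracontact metric vector space of dimension 2n+1 and let h be an endomorphism of V that is g-self-adjoint, anticommutes with φ, satisfies hξ = 0, and satisfies h∘h = (1+κ)·φ∘φ for a real constant κ > −1; set λ = √(1+κ). Then there exists a basis {X₁, …, Xₙ, Y₁, …, Yₙ, ξ} of V consisting of eigenvectors of h with hXᵢ = λXᵢ and Yᵢ = φXᵢ (so hYᵢ = −λYᵢ), such that the basis is g-orthogonal, g(ξ, ξ) = 1, and for each i one has g(Xᵢ, Xᵢ) = −g(Yᵢ, Yᵢ) = εᵢ with εᵢ ∈ {+1, −1}. -/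
/-!
The operator `h` is diagonalizable with eigenvalues `λ`, `-λ` and `0`, and `φ` exchanges the
eigenspaces of `λ` and `-λ`; hence `V = E ⊕ φ E ⊕ ⟨ξ⟩`, where `E` is the `λ`-eigenspace.
Self-adjointness of `h` makes the three summands mutually `g`-orthogonal, so `g` is nondegenerate
on `E`. By Sylvester's law of inertia, `E` has an orthogonal basis of vectors of square `±1`, and
`φ` carries it to such a basis of `φ E` with all signs reversed.
-/

open Module Module.End Submodule

theorem map_mem_eigenspace_neg {R M : Type*} [CommRing R] [AddCommGroup M] [Module R M]
    {f φ : End R M} {μ : R} {x : M} (hanti : ∀ x, f (φ x) = -φ (f x))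
    (hx : x ∈ eigenspace f μ) : φ x ∈ eigenspace f (-μ) := by
  rw [mem_eigenspace_iff] at hx ⊢
  rw [hanti, hx, map_smul, neg_smul]

theorem apply_eq_zero_of_mem_eigenspace_of_ne {R M : Type*} [CommRing R] [IsDomain R]
    [AddCommGroup M] [Module R M] {B : LinearMap.BilinForm R M} {f : End R M} {μ ν : R} {x y : M}
    (hf : B.IsSelfAdjoint f) (hμν : μ ≠ ν) (hx : x ∈ eigenspace f μ) (hy : y ∈ eigenspace f ν) :
    B x y = 0 := by
  have hxy : μ * B x y = ν * B x y := by
    simpa [mem_eigenspace_iff.mp hx, mem_eigenspace_iff.mp hy] using hf x y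
  by_contra hB
  exact hμν (mul_right_cancel₀ hB hxy)

theorem apply_map_eq_zero_of_mem_eigenspace {R M : Type*} [CommRing R] [IsDomain R]
    [NeZero (2 : R)] [AddCommGroup M] [Module R M] {B : LinearMap.BilinForm R M} {f φ : End R M}
    {μ : R} {x y : M} (hf : B.IsSelfAdjoint f) (hanti : ∀ x, f (φ x) = -φ (f x)) (hμ : μ ≠ 0)
    (hx : x ∈ eigenspace f μ) (hy : y ∈ eigenspace f μ) : B x (φ y) = 0 := by
  have hμ_ne_neg : μ ≠ -μ := fun hμμ ↦
    mul_ne_zero two_ne_zero hμ (by linear_combination hμμ)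
  exact apply_eq_zero_of_mem_eigenspace_of_ne hf hμ_ne_neg hx (map_mem_eigenspace_neg hanti hy)

theorem mem_eigenspace_sup_eigenspace_neg {K M : Type*} [Field K] [NeZero (2 : K)]
    [AddCommGroup M] [Module K M] {f : End K M} {μ : K} {x : M} (hμ : μ ≠ 0)
    (hx : f (f x) = μ ^ 2 • x) : x ∈ eigenspace f μ ⊔ eigenspace f (-μ) := by
  have hpos : f x + μ • x ∈ eigenspace f μ := by
    rw [mem_eigenspace_iff, map_add, map_smul, hx]
    module
  have hneg : f x - μ • x ∈ eigenspace f (-μ) := by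
    rw [mem_eigenspace_iff, map_sub, map_smul, hx]
    module
  have hsum : x = (2 * μ)⁻¹ • (f x + μ • x) + -(2 * μ)⁻¹ • (f x - μ • x) := by
    match_scalars <;> field_simp <;> ring
  rw [hsum]
  exact add_mem_sup (smul_mem _ _ hpos) (smul_mem _ _ hneg)

theorem nondegenerate_restrict_of_sup_eq_top {R M : Type*} [CommRing R] [AddCommGroup M]
    [Module R M] {B : LinearMap.BilinForm R M} (hB : B.Nondegenerate) (hrefl : B.IsRefl)
    {W W' : Submodule R M} (hsup : W ⊔ W' = ⊤) (hortho : W' ≤ B.orthogonal W) :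
    (B.restrict W).Nondegenerate := by
  refine B.nondegenerate_restrict_of_disjoint_orthogonal hrefl (disjoint_def.mpr ?_)
  intro x hxW hxW'
  refine hB.1 x fun y ↦ ?_
  obtain ⟨w, hw, w', hw', rfl⟩ := mem_sup.mp (hsup ▸ mem_top : y ∈ W ⊔ W')
  rw [map_add, hrefl _ _ (hxW' w hw), hortho hw' x hxW, add_zero]

theorem exists_units_mul_self_mul_eq_one_or_neg_one {a : ℝ} (ha : a ≠ 0) :
    ∃ c : ℝˣ, (c * c : ℝ) * a = 1 ∨ (c * c : ℝ) * a = -1 := by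
  have hsqrt : √|a| ≠ 0 := Real.sqrt_ne_zero'.mpr (abs_pos.mpr ha)
  refine ⟨(Units.mk0 _ hsqrt)⁻¹, ?_⟩
  rw [Units.val_inv_eq_inv_val, Units.val_mk0, ← mul_inv, Real.mul_self_sqrt (abs_nonneg a)]
  rcases abs_choice a with h | h <;> rw [h]
  · exact .inl (inv_mul_cancel₀ ha)
  · exact .inr (by rw [inv_neg, neg_mul, inv_mul_cancel₀ ha])

theorem exists_isOrthoᵢ_basis_apply_self_eq_one_or_neg_one {W : Type*} [AddCommGroup W]
    [Module ℝ W] [FiniteDimensional ℝ W] {B : LinearMap.BilinForm ℝ W} (hsymm : B.IsSymm)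
    (hB : B.Nondegenerate) :
    ∃ b : Basis (Fin (finrank ℝ W)) ℝ W,
      B.IsOrthoᵢ b ∧ ∀ i, B (b i) (b i) = 1 ∨ B (b i) (b i) = -1 := by
  have : Invertible (2 : ℝ) := invertibleOfNonzero two_ne_zero
  obtain ⟨v, hv⟩ := LinearMap.BilinForm.exists_orthogonal_basis
    (LinearMap.BilinForm.isSymm_iff.mp hsymm)
  have hv_ne (i) : B (v i) (v i) ≠ 0 := hv.not_isOrtho_basis_self_of_separatingLeft hB.1 i
  choose c hc using fun i ↦ exists_units_mul_self_mul_eq_one_or_neg_one (hv_ne i)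
  have hb (i j) : B (v.unitsSMul c i) (v.unitsSMul c j) = (c i * c j : ℝ) * B (v i) (v j) := by
    simp [Basis.unitsSMul_apply, Units.smul_def, mul_assoc, mul_left_comm]
  refine ⟨v.unitsSMul c, fun i j hij ↦ ?_, fun i ↦ by simpa only [hb] using hc i⟩
  exact (hb i j).trans (mul_eq_zero_of_right _ (hv hij))

/-- An almost paracontact structure in the sense of Satō: `η ξ = 1` and `φ² = id - η ⊗ ξ`, with
no condition on the dimensions of the eigenspaces of `φ`. -/
structure IsAlmostParacontact {R V : Type*} [CommRing R] [AddCommGroup V] [Module R V]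
    (φ : End R V) (ξ : V) (η : Dual R V) : Prop where
  eta_xi : η ξ = 1
  phi_phi : ∀ x, φ (φ x) = x - η x • ξ

/-- An almost paracontact structure together with a metric `g`, not necessarily definite, for
which `φ` is an anti-isometry up to the `η`-term. -/
structure IsAlmostParacontactMetric {R V : Type*} [CommRing R] [AddCommGroup V] [Module R V]
    (φ : End R V) (ξ : V) (η : Dual R V) (g : LinearMap.BilinForm R V) : Prop
    extends IsAlmostParacontact φ ξ η where
  isSymm : g.IsSymm
  nondegenerate : g.Nondegenerate
  apply_phi_phi : ∀ x y, g (φ x) (φ y) = -g x y + η x * η y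

/-- The family `(X, φ X, ξ)`; it is a `φ`-basis when it is a basis of the whole space. -/
def phiFamily {R V ι : Type*} [CommRing R] [AddCommGroup V] [Module R V]
    (φ : End R V) (ξ : V) (X : ι → V) : ι ⊕ (ι ⊕ Unit) → V :=
  Sum.elim X (Sum.elim (fun i ↦ φ (X i)) fun _ ↦ ξ)

theorem span_range_phiFamily {R V ι : Type*} [CommRing R] [AddCommGroup V] [Module R V]
    (φ : End R V) (ξ : V) (X : ι → V) :
    span R (Set.range (phiFamily φ ξ X)) =
      span R (Set.range X) ⊔ ((span R (Set.range X)).map φ ⊔ span R {ξ}) := by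
  simp only [phiFamily, Set.Sum.elim_range, span_union, Set.range_const, map_span, ← Set.range_comp,
    Function.comp_def]

theorem finrank_eq_two_mul_card_add_one_of_phiFamily {R V ι : Type*} [CommRing R] [Nontrivial R]
    [AddCommGroup V] [Module R V] [Fintype ι] {φ : End R V} {ξ : V} {X : ι → V}
    (hli : LinearIndependent R (phiFamily φ ξ X))
    (hspan : span R (Set.range (phiFamily φ ξ X)) = ⊤) :
    finrank R V = 2 * Fintype.card ι + 1 := by
  rw [finrank_eq_card_basis (Basis.mk hli hspan.ge), Fintype.card_sum, Fintype.card_sum,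
    Fintype.card_unit, two_mul, add_assoc]

namespace IsAlmostParacontact

variable {R V : Type*} [CommRing R] [IsReduced R] [AddCommGroup V] [Module R V]
  {φ : End R V} {ξ : V} {η : Dual R V}

theorem phi_xi (hV : IsAlmostParacontact φ ξ η) : φ ξ = 0 := by
  have hφφξ : φ (φ ξ) = 0 := by rw [hV.phi_phi, hV.eta_xi, one_smul, sub_self]
  have hφξ : φ ξ = η (φ ξ) • ξ := by
    rw [← sub_eq_zero, ← hV.phi_phi, hφφξ, map_zero]
  have hsq : η (φ ξ) ^ 2 = 0 := by
    calc η (φ ξ) ^ 2 = η (φ (η (φ ξ) • ξ)) := by rw [map_smul, map_smul, smul_eq_mul, sq]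
      _ = 0 := by rw [← hφξ, hφφξ, map_zero]
  rw [hφξ, eq_zero_of_pow_eq_zero hsq, zero_smul]

theorem eta_phi (hV : IsAlmostParacontact φ ξ η) (x : V) : η (φ x) = 0 := by
  have hφφφ : φ (φ (φ x)) = φ x := by
    rw [hV.phi_phi x, map_sub, map_smul, hV.phi_xi, smul_zero, sub_zero]
  have hξ : η (φ x) • ξ = 0 := sub_eq_self.mp ((hV.phi_phi (φ x)).symm.trans hφφφ)
  simpa [hV.eta_xi] using congrArg η hξ

end IsAlmostParacontact

namespace IsAlmostParacontactMetric

section CommRing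

variable {R V : Type*} [CommRing R] [AddCommGroup V] [Module R V]
  {φ : End R V} {ξ : V} {η : Dual R V} {g : LinearMap.BilinForm R V}

theorem apply_xi_right [IsReduced R] (hV : IsAlmostParacontactMetric φ ξ η g) (x : V) :
    g x ξ = η x := by
  have hx : 0 = -g x ξ + η x := by
    simpa [hV.phi_xi, hV.eta_xi] using hV.apply_phi_phi x ξ
  linear_combination hx

theorem eta_eq_zero_of_mem_eigenspace [IsDomain R] {h : End R V} {μ : R} {x : V}
    (hV : IsAlmostParacontactMetric φ ξ η g) (hsa : g.IsSelfAdjoint h) (hhξ : h ξ = 0)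
    (hμ : μ ≠ 0) (hx : x ∈ eigenspace h μ) : η x = 0 := by
  have hξ : ξ ∈ eigenspace h 0 := by rw [mem_eigenspace_iff, hhξ, zero_smul]
  rw [← hV.apply_xi_right, apply_eq_zero_of_mem_eigenspace_of_ne hsa hμ hx hξ]

theorem apply_phi_phi_of_mem_eigenspace [IsDomain R] {h : End R V} {μ : R} {x : V}
    (hV : IsAlmostParacontactMetric φ ξ η g) (hsa : g.IsSelfAdjoint h) (hhξ : h ξ = 0)
    (hμ : μ ≠ 0) (hx : x ∈ eigenspace h μ) (y : V) : g (φ x) (φ y) = -g x y := by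
  rw [hV.apply_phi_phi, hV.eta_eq_zero_of_mem_eigenspace hsa hhξ hμ hx, zero_mul, add_zero]

theorem eigenspace_neg_eq_map_phi [IsDomain R] {h : End R V} {μ : R}
    (hV : IsAlmostParacontactMetric φ ξ η g) (hsa : g.IsSelfAdjoint h)
    (hanti : ∀ x, h (φ x) = -φ (h x)) (hhξ : h ξ = 0) (hμ : μ ≠ 0) :
    eigenspace h (-μ) = (eigenspace h μ).map φ := by
  refine le_antisymm (fun y hy ↦ ⟨φ y, ?_, ?_⟩)
    (map_le_iff_le_comap.mpr fun x ↦ map_mem_eigenspace_neg hanti)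
  · simpa using map_mem_eigenspace_neg hanti hy
  · rw [hV.phi_phi, hV.eta_eq_zero_of_mem_eigenspace hsa hhξ (neg_ne_zero.mpr hμ) hy, zero_smul,
      sub_zero]

theorem isOrthoᵢ_phiFamily [IsDomain R] [NeZero (2 : R)] {ι : Type*} {h : End R V} {μ : R}
    {X : ι → V} (hV : IsAlmostParacontactMetric φ ξ η g) (hsa : g.IsSelfAdjoint h)
    (hanti : ∀ x, h (φ x) = -φ (h x)) (hhξ : h ξ = 0) (hμ : μ ≠ 0)
    (hX : ∀ i, X i ∈ eigenspace h μ) (hXo : g.IsOrthoᵢ X) : g.IsOrthoᵢ (phiFamily φ ξ X) := by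
  have hXφX (i j) : g (X i) (φ (X j)) = 0 :=
    apply_map_eq_zero_of_mem_eigenspace hsa hanti hμ (hX i) (hX j)
  have hXξ (i) : g (X i) ξ = 0 :=
    (hV.apply_xi_right _).trans (hV.eta_eq_zero_of_mem_eigenspace hsa hhξ hμ (hX i))
  have hφXξ (i) : g (φ (X i)) ξ = 0 := (hV.apply_xi_right _).trans (hV.eta_phi _)
  have hrefl := hV.isSymm.isRefl
  rintro (i | i | i) (j | j | j) hij
  · exact hXo (by simpa using hij)
  · exact hXφX i j
  · exact hXξ i
  · exact hrefl _ _ (hXφX j i)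
  · have hXX : g (X i) (X j) = 0 := hXo (by simpa using hij)
    exact (hV.apply_phi_phi_of_mem_eigenspace hsa hhξ hμ (hX i) _).trans (by rw [hXX, neg_zero])
  · exact hφXξ i
  · exact hrefl _ _ (hXξ j)
  · exact hrefl _ _ (hφXξ j)
  · exact absurd rfl hij

end CommRing

variable {K V : Type*} [Field K] [NeZero (2 : K)] [AddCommGroup V] [Module K V]
  {φ : End K V} {ξ : V} {η : Dual K V} {g : LinearMap.BilinForm K V} {h : End K V} {μ : K}

theorem eigenspace_sup_map_phi_sup_span_eq_top (hV : IsAlmostParacontactMetric φ ξ η g)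
    (hsa : g.IsSelfAdjoint h) (hanti : ∀ x, h (φ x) = -φ (h x)) (hhξ : h ξ = 0)
    (hh : ∀ x, h (h x) = μ ^ 2 • φ (φ x)) (hμ : μ ≠ 0) :
    eigenspace h μ ⊔ ((eigenspace h μ).map φ ⊔ span K {ξ}) = ⊤ := by
  rw [← sup_assoc, ← hV.eigenspace_neg_eq_map_phi hsa hanti hhξ hμ, eq_top_iff]
  rintro z -
  have hz : h (h (z - η z • ξ)) = μ ^ 2 • (z - η z • ξ) := by
    rw [hh, map_sub, map_smul, hV.phi_xi, smul_zero, sub_zero, hV.phi_phi]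
  rw [← sub_add_cancel z (η z • ξ)]
  exact add_mem_sup (mem_eigenspace_sup_eigenspace_neg hμ hz)
    (smul_mem _ _ (mem_span_singleton_self ξ))

theorem nondegenerate_restrict_eigenspace (hV : IsAlmostParacontactMetric φ ξ η g)
    (hsa : g.IsSelfAdjoint h) (hanti : ∀ x, h (φ x) = -φ (h x)) (hhξ : h ξ = 0)
    (hh : ∀ x, h (h x) = μ ^ 2 • φ (φ x)) (hμ : μ ≠ 0) :
    (g.restrict (eigenspace h μ)).Nondegenerate := by
  refine nondegenerate_restrict_of_sup_eq_top hV.nondegenerate hV.isSymm.isRefl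
    (hV.eigenspace_sup_map_phi_sup_span_eq_top hsa hanti hhξ hh hμ) (sup_le ?_ ?_)
  · rintro _ ⟨y, hy, rfl⟩ x hx
    exact apply_map_eq_zero_of_mem_eigenspace hsa hanti hμ hx hy
  · refine (span_singleton_le_iff_mem _ _).mpr fun x hx ↦ ?_
    exact (hV.apply_xi_right x).trans (hV.eta_eq_zero_of_mem_eigenspace hsa hhξ hμ hx)

variable {ι : Type*} {X : ι → V}

theorem linearIndependent_phiFamily (hV : IsAlmostParacontactMetric φ ξ η g)
    (hsa : g.IsSelfAdjoint h) (hanti : ∀ x, h (φ x) = -φ (h x)) (hhξ : h ξ = 0) (hμ : μ ≠ 0)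
    (hX : ∀ i, X i ∈ eigenspace h μ) (hXo : g.IsOrthoᵢ X) (hXn : ∀ i, g (X i) (X i) ≠ 0) :
    LinearIndependent K (phiFamily φ ξ X) := by
  refine LinearMap.linearIndependent_of_isOrthoᵢ
    (hV.isOrthoᵢ_phiFamily hsa hanti hhξ hμ hX hXo) ?_
  rintro (i | i | -)
  · exact hXn i
  · exact (hV.apply_phi_phi_of_mem_eigenspace hsa hhξ hμ (hX i) _).trans_ne
      (neg_ne_zero.mpr (hXn i))
  · simp [phiFamily, hV.apply_xi_right, hV.eta_xi]

theorem span_range_phiFamily_basis_eq_top (hV : IsAlmostParacontactMetric φ ξ η g)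
    (hsa : g.IsSelfAdjoint h) (hanti : ∀ x, h (φ x) = -φ (h x)) (hhξ : h ξ = 0)
    (hh : ∀ x, h (h x) = μ ^ 2 • φ (φ x)) (hμ : μ ≠ 0) (b : Basis ι K (eigenspace h μ)) :
    span K (Set.range (phiFamily φ ξ fun i ↦ (b i : V))) = ⊤ := by
  have hb : span K (Set.range fun i ↦ (b i : V)) = eigenspace h μ := by
    rw [Set.range_comp' Subtype.val b, ← coe_subtype, ← map_span, b.span_eq, map_subtype_top]
  rw [span_range_phiFamily, hb, hV.eigenspace_sup_map_phi_sup_span_eq_top hsa hanti hhξ hh hμ]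

end IsAlmostParacontactMetric

/-- On an almost paracontact metric vector space with a `g`-self-adjoint
`h` anticommuting with `φ`, `hξ = 0` and `h² = (1+κ)φ²` for `κ > −1` (`λ = √(1+κ)`), there
is a basis `{X₁,…,Xₙ, Y₁,…,Yₙ, ξ}` of eigenvectors of `h` with `hXᵢ = λXᵢ`, `Yᵢ = φXᵢ`
(hence `hYᵢ = −λYᵢ`), the basis is `g`-orthogonal, `g(ξ,ξ) = 1`, and
`g(Xᵢ,Xᵢ) = −g(Yᵢ,Yᵢ) = εᵢ ∈ {±1}`. -/
theorem exists_orthogonal_eigenbasis_of_h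
    (n : ℕ) (V : Type*) [AddCommGroup V] [Module ℝ V] [FiniteDimensional ℝ V]
    (hdim : Module.finrank ℝ V = 2 * n + 1)
    (φ : V →ₗ[ℝ] V) (ξ : V) (η : V →ₗ[ℝ] ℝ)
    (hηξ : η ξ = 1)
    (hφφ : ∀ x : V, φ (φ x) = x - η x • ξ)
    (hDplus : Module.finrank ℝ (Module.End.eigenspace φ 1) = n)
    (hDminus : Module.finrank ℝ (Module.End.eigenspace φ (-1)) = n)
    (g : LinearMap.BilinForm ℝ V)
    (hgsymm : ∀ x y : V, g x y = g y x)
    (hgnd : ∀ x : V, (∀ y : V, g x y = 0) → x = 0)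
    (hcompat : ∀ x y : V, g (φ x) (φ y) = - g x y + η x * η y)
    (h : V →ₗ[ℝ] V)
    (hsa : ∀ x y : V, g (h x) y = g x (h y))
    (hanti : ∀ x : V, h (φ x) = - φ (h x))
    (hhξ : h ξ = 0)
    (κ : ℝ) (hκ : -1 < κ)
    (hh : ∀ x : V, h (h x) = (1 + κ) • φ (φ x))
    (lam : ℝ) (hlam : lam = Real.sqrt (1 + κ)) :
    ∃ (X Y : Fin n → V) (ε : Fin n → ℝ),
      (∀ i, h (X i) = lam • X i) ∧
      (∀ i, Y i = φ (X i)) ∧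
      (∀ i, h (Y i) = -lam • Y i) ∧
      LinearIndependent ℝ (Sum.elim X (Sum.elim Y (fun _ : Unit => ξ))) ∧
      Submodule.span ℝ (Set.range (Sum.elim X (Sum.elim Y (fun _ : Unit => ξ)))) = ⊤ ∧
      (∀ i j, i ≠ j → g (X i) (X j) = 0) ∧
      (∀ i j, i ≠ j → g (Y i) (Y j) = 0) ∧
      (∀ i j, g (X i) (Y j) = 0) ∧
      (∀ i, g (X i) ξ = 0) ∧
      (∀ i, g (Y i) ξ = 0) ∧
      g ξ ξ = 1 ∧
      (∀ i, ε i = 1 ∨ ε i = -1) ∧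
      (∀ i, g (X i) (X i) = ε i) ∧
      (∀ i, g (Y i) (Y i) = -ε i) := by
  have hV : IsAlmostParacontactMetric φ ξ η g :=
    ⟨⟨hηξ, hφφ⟩, ⟨hgsymm⟩, ⟨hgnd, fun y hy ↦ hgnd y fun x ↦ (hgsymm y x).trans (hy x)⟩, hcompat⟩
  have hlam0 : lam ≠ 0 := hlam ▸ Real.sqrt_ne_zero'.mpr (by linarith)
  have hhlam (x) : h (h x) = lam ^ 2 • φ (φ x) := by rw [hh, hlam, Real.sq_sqrt (by linarith)]
  obtain ⟨b, hbo, hb1⟩ := exists_isOrthoᵢ_basis_apply_self_eq_one_or_neg_one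
    (hV.isSymm.restrict _) (hV.nondegenerate_restrict_eigenspace hsa hanti hhξ hhlam hlam0)
  have hbE (i) : (b i : V) ∈ eigenspace h lam := (b i).2
  have hbn (i) : g (b i) (b i) ≠ 0 := by rcases hb1 i with hi | hi <;> exact hi.trans_ne (by simp)
  have hli := hV.linearIndependent_phiFamily hsa hanti hhξ hlam0 hbE hbo hbn
  have hspan := hV.span_range_phiFamily_basis_eq_top hsa hanti hhξ hhlam hlam0 b
  have hortho := hV.isOrthoᵢ_phiFamily hsa hanti hhξ hlam0 hbE hbo
  obtain rfl : finrank ℝ (eigenspace h lam) = n := by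
    have hcard := finrank_eq_two_mul_card_add_one_of_phiFamily hli hspan
    rw [Fintype.card_fin] at hcard
    lia
  exact ⟨fun i ↦ b i, fun i ↦ φ (b i), fun i ↦ g (b i) (b i),
    fun i ↦ mem_eigenspace_iff.mp (hbE i), fun _ ↦ rfl,
    fun i ↦ mem_eigenspace_iff.mp (map_mem_eigenspace_neg hanti (hbE i)), hli, hspan,
    fun i j hij ↦ hbo hij,
    fun i j hij ↦ hortho (i := .inr (.inl i)) (j := .inr (.inl j)) (by simpa),
    fun i j ↦ hortho (i := .inl i) (j := .inr (.inl j)) (by simp),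
    fun i ↦ hortho (i := .inl i) (j := .inr (.inr ())) (by simp),
    fun i ↦ hortho (i := .inr (.inl i)) (j := .inr (.inr ())) (by simp),
    (hV.apply_xi_right ξ).trans hηξ, hb1, fun _ ↦ rfl,
    fun i ↦ hV.apply_phi_phi_of_mem_eigenspace hsa hhξ hlam0 (hbE i) _⟩
end

section
/- Let V be a 3-dimensional real vector space, (φ, ξ, η, g) an almost contact metric structure on V (n = 1), and h a g-self-adjoint endomorphism with h∘φ = −φ∘h, hξ = 0, and h∘h = (κ−1)·φ∘φ for a real constant κ < 1; set λ = √(1−κ), φ̃ = (1/λ)h, g̃(X,Y) = (1/λ)·g(X, (φ∘h)Y) + η(X)η(Y), and for a real μ let h̃ = (1/(2λ))·((2−μ)·φ∘h + 2(1−κ)·φ). Let e ∈ ker η be a g-unit vector with he = λe, and put ẽ₁ = (e − φe)/√2 and ẽ₂ = (e + φe)/√2. Then ẽ₂ = φ̃ẽ₁; the basis {ẽ₁, ẽ₂, ξ} is g̃-orthogonal with g̃(ẽ₁, ẽ₁) = −1, g̃(ẽ₂, ẽ₂) = 1, g̃(ξ, ξ) = 1; and the matrix of h̃ is given by h̃ẽ₁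 = (μ/2 − 1)ẽ₁ + λẽ₂, h̃ẽ₂ = −λẽ₁ + (1 − μ/2)ẽ₂, h̃ξ = 0. -/
/-!
The unit vector `u = (e - φe)/√2` lies in `ker η` and satisfies `hu = λφu`, hence `h(φu) = λu`:
in the frame `u, φu, ξ` the tensor `h` exchanges the first two vectors up to the factor `λ`, while
`φ` rotates them by a right angle. So `φ ∘ h` is diagonal in this frame, with eigenvalues
`-λ, λ, 0`. Hence `g̃` is `g` with the sign of `g(u, u)` reversed, and `h̃`, being a combination
of `φ ∘ h` and `φ`, can be read off.
-/

/-- An almost contact structure on a module: an endomorphism `φ`, a Reeb vector `ξ` and a linear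
form `η` with `η(ξ) = 1` and `φ² = -id + η ⊗ ξ`. -/
structure IsAlmostContact {R V : Type*} [CommRing R] [AddCommGroup V] [Module R V]
    (φ : V →ₗ[R] V) (ξ : V) (η : V →ₗ[R] R) : Prop where
  eta_xi : η ξ = 1
  phi_phi : ∀ x, φ (φ x) = -x + η x • ξ

/-- An almost contact structure with a compatible symmetric bilinear form `g`. Neither positivity
nor nondegeneracy of `g` is demanded, so that the notion makes sense over any ring; skew-symmetry
of `φ` is a consequence (`IsAlmostContactPseudoMetric.apply_phi_right`). -/
structure IsAlmostContactPseudoMetric {R V : Type*} [CommRing R] [AddCommGroup V] [Module R V]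
    (φ : V →ₗ[R] V) (ξ : V) (η : V →ₗ[R] R) (g : LinearMap.BilinForm R V) : Prop
    extends IsAlmostContact φ ξ η where
  symm : ∀ x y, g x y = g y x
  phi_apply_phi : ∀ x y, g (φ x) (φ y) = g x y - η x * η y

section CommRing

variable {R V : Type*} [CommRing R] [AddCommGroup V] [Module R V]
  {φ : V →ₗ[R] V} {ξ : V} {η : V →ₗ[R] R}

namespace IsAlmostContact

theorem phi_xi [IsReduced R] (H : IsAlmostContact φ ξ η) : φ ξ = 0 := by
  have phi_phi_xi : φ (φ ξ) = 0 := by simp [H.phi_phi, H.eta_xi]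
  have phi_xi_eq : φ ξ = η (φ ξ) • ξ := by
    have := H.phi_phi (φ ξ)
    rwa [phi_phi_xi, map_zero, eq_comm, neg_add_eq_zero] at this
  have eta_phi_xi : η (φ ξ) = 0 := by
    have smul_phi_xi : η (φ ξ) • φ ξ = 0 := by rw [← map_smul, ← phi_xi_eq, phi_phi_xi]
    exact (pow_eq_zero_iff two_ne_zero).mp (by simpa [sq] using congrArg η smul_phi_xi)
  rw [phi_xi_eq, eta_phi_xi, zero_smul]

theorem eta_phi [IsReduced R] (H : IsAlmostContact φ ξ η) (x : V) : η (φ x) = 0 := by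
  have eta_phi_smul : η (φ x) • ξ = 0 := by
    simpa [H.phi_phi x, H.phi_xi] using H.phi_phi (φ x)
  simpa [H.eta_xi] using congrArg η eta_phi_smul

theorem phi_phi_of_eta_eq_zero (H : IsAlmostContact φ ξ η) {x : V} (hx : η x = 0) :
    φ (φ x) = -x := by
  simp [H.phi_phi, hx]

theorem phi_sub_phi (H : IsAlmostContact φ ξ η) {x : V} (hx : η x = 0) :
    φ (x - φ x) = x + φ x := by
  rw [map_sub, H.phi_phi_of_eta_eq_zero hx]
  abel

end IsAlmostContact

namespace IsAlmostContactPseudoMetric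

variable [IsReduced R] {g : LinearMap.BilinForm R V}

theorem apply_xi (H : IsAlmostContactPseudoMetric φ ξ η g) (x : V) : g x ξ = η x := by
  simpa [H.phi_xi, H.eta_xi, eq_comm (a := (0 : R)), sub_eq_zero] using H.phi_apply_phi x ξ

theorem apply_phi_right (H : IsAlmostContactPseudoMetric φ ξ η g) (x y : V) :
    g x (φ y) = -g (φ x) y := by
  simpa [H.phi_phi, H.apply_xi, H.eta_phi, eq_comm] using H.phi_apply_phi x (φ y)

theorem sub_phi_apply_self (H : IsAlmostContactPseudoMetric φ ξ η g) {x : V} (hx : η x = 0) :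
    g (x - φ x) (x - φ x) = 2 * g x x := by
  simp only [map_sub, LinearMap.sub_apply, H.phi_apply_phi, H.apply_phi_right, hx]
  ring

end IsAlmostContactPseudoMetric

theorem map_sub_phi_of_anticommute {h : V →ₗ[R] V} (hanti : ∀ x, h (φ x) = -φ (h x)) {c : R}
    {e : V} (he : h e = c • e) : h (e - φ e) = c • (e + φ e) := by
  simp [hanti, he]

theorem IsAlmostContact.map_phi_of_anticommute (H : IsAlmostContact φ ξ η) {h : V →ₗ[R] V}
    (hanti : ∀ x, h (φ x) = -φ (h x)) {c : R} {u : V} (hηu : η u = 0) (hu : h u = c • φ u) :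
    h (φ u) = c • u := by
  simp [hanti, hu, H.phi_phi_of_eta_eq_zero hηu]

end CommRing

section Field

variable {K V : Type*} [Field K] [AddCommGroup V] [Module K V]

/-- The metric `g̃ = λ⁻¹ g(·, φh·) + η ⊗ η` of the canonical paracontact structure. -/
def canonicalForm (φ : V →ₗ[K] V) (η : V →ₗ[K] K) (g : LinearMap.BilinForm K V)
    (h : V →ₗ[K] V) (lam : K) : LinearMap.BilinForm K V :=
  lam⁻¹ • g.compRight (φ ∘ₗ h) + LinearMap.BilinForm.linMulLin η η

/-- The tensor `h̃ = (1/2) L_ξ φ̃` of the canonical paracontact structure, encoded by its algebraic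
expression `(2λ)⁻¹ ((2 - μ) φ ∘ h + 2 (1 - κ) φ)` on a contact metric `(κ, μ, ν)`-manifold. -/
def canonicalH (φ h : V →ₗ[K] V) (κ μ lam : K) : V →ₗ[K] V :=
  (2 * lam)⁻¹ • ((2 - μ) • φ ∘ₗ h + (2 * (1 - κ)) • φ)

variable {φ : V →ₗ[K] V} {ξ : V} {η : V →ₗ[K] K} {g : LinearMap.BilinForm K V}
  {h : V →ₗ[K] V} {κ lam : K} {u : V}

@[simp]
theorem canonicalForm_apply (x y : V) :
    canonicalForm φ η g h lam x y = lam⁻¹ * g x (φ (h y)) + η x * η y :=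
  rfl

@[simp]
theorem canonicalH_apply (μ : K) (x : V) :
    canonicalH φ h κ μ lam x = (2 * lam)⁻¹ • ((2 - μ) • φ (h x) + (2 * (1 - κ)) • φ x) :=
  rfl

namespace IsAlmostContact

theorem canonicalForm_xi_right (H : IsAlmostContact φ ξ η) (hhξ : h ξ = 0) (x : V) :
    canonicalForm φ η g h lam x ξ = η x := by
  simp [hhξ, H.eta_xi]

theorem canonicalForm_of_h_eq (H : IsAlmostContact φ ξ η) (hlam : lam ≠ 0) (hηu : η u = 0)
    (hu : h u = lam • φ u) (x : V) : canonicalForm φ η g h lam x u = -g x u := by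
  simp [hu, hηu, H.phi_phi_of_eta_eq_zero hηu, hlam]

theorem canonicalForm_phi_of_h_eq (H : IsAlmostContact φ ξ η)
    (hanti : ∀ x, h (φ x) = -φ (h x)) (hlam : lam ≠ 0) (hηu : η u = 0)
    (hu : h u = lam • φ u) (x : V) : canonicalForm φ η g h lam x (φ u) = g x (φ u) := by
  simp [H.map_phi_of_anticommute hanti hηu hu, H.eta_phi, hlam]

theorem canonicalH_xi (H : IsAlmostContact φ ξ η) (hhξ : h ξ = 0) (μ : K) :
    canonicalH φ h κ μ lam ξ = 0 := by
  simp [hhξ, H.phi_xi]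

variable [NeZero (2 : K)]

theorem canonicalH_of_h_eq (H : IsAlmostContact φ ξ η) (hlam : lam ≠ 0)
    (hlam_sq : lam ^ 2 = 1 - κ) (hηu : η u = 0) (hu : h u = lam • φ u) (μ : K) :
    canonicalH φ h κ μ lam u = (μ / 2 - 1) • u + lam • φ u := by
  rw [canonicalH_apply, hu, map_smul, H.phi_phi_of_eta_eq_zero hηu, ← hlam_sq]
  match_scalars <;> field_simp
  ring

theorem canonicalH_phi_of_h_eq (H : IsAlmostContact φ ξ η) (hanti : ∀ x, h (φ x) = -φ (h x))
    (hlam : lam ≠ 0) (hlam_sq : lam ^ 2 = 1 - κ) (hηu : η u = 0) (hu : h u = lam • φ u) (μ : K) :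
    canonicalH φ h κ μ lam (φ u) = -(lam • u) + (1 - μ / 2) • φ u := by
  rw [canonicalH_apply, H.map_phi_of_anticommute hanti hηu hu, map_smul,
    H.phi_phi_of_eta_eq_zero hηu, ← hlam_sq]
  match_scalars <;> field_simp

end IsAlmostContact

namespace IsAlmostContactPseudoMetric

variable [NeZero (2 : K)]

theorem apply_phi_self (H : IsAlmostContactPseudoMetric φ ξ η g) (x : V) : g x (φ x) = 0 := by
  have eq_neg : g x (φ x) = -g x (φ x) := by rw [H.symm, ← H.apply_phi_right, H.symm]
  have two_mul_eq : 2 * g x (φ x) = 0 := by linear_combination eq_neg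
  exact (mul_eq_zero.mp two_mul_eq).resolve_left two_ne_zero

theorem linearIndependent_phi_xi (H : IsAlmostContactPseudoMetric φ ξ η g) (hηu : η u = 0)
    (hgu : g u u = 1) : LinearIndependent K ![u, φ u, ξ] := by
  rw [Fintype.linearIndependent_iff]
  intro c hc
  simp only [Fin.sum_univ_three, Matrix.cons_val] at hc
  have c0 : c 0 = 0 := by simpa [hgu, H.apply_phi_self, H.apply_xi, hηu] using congrArg (g u) hc
  have c1 : c 1 = 0 := by
    simpa [H.phi_apply_phi, H.symm (φ u) u, hgu, H.apply_phi_self, H.apply_xi, H.eta_phi, hηu]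
      using congrArg (g (φ u)) hc
  have c2 : c 2 = 0 := by simpa [hηu, H.eta_phi, H.eta_xi] using congrArg η hc
  simp [Fin.forall_fin_succ, c0, c1, c2]

theorem span_phi_xi_eq_top (H : IsAlmostContactPseudoMetric φ ξ η g)
    (hdim : Module.finrank K V = 3) (hηu : η u = 0) (hgu : g u u = 1) :
    Submodule.span K {u, φ u, ξ} = ⊤ := by
  have span_range := (H.linearIndependent_phi_xi hηu hgu).span_eq_top_of_card_eq_finrank
    (by simp [hdim])
  simpa only [Matrix.range_cons, Matrix.range_empty, Set.union_empty, Set.singleton_union]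
    using span_range

end IsAlmostContactPseudoMetric

theorem matrix_of_h_tilde_general [NeZero (2 : K)] (H : IsAlmostContactPseudoMetric φ ξ η g)
    (hanti : ∀ x, h (φ x) = -φ (h x)) (hhξ : h ξ = 0) (hlam : lam ≠ 0) (hlam_sq : lam ^ 2 = 1 - κ)
    (μ : K) {e : V} (heη : η e = 0) (hge : g e e = 1) (heig : h e = lam • e)
    {s : K} (hs : s ^ 2 = 2) {f₁ f₂ : V}
    (hf₁ : f₁ = s⁻¹ • (e - φ e)) (hf₂ : f₂ = s⁻¹ • (e + φ e)) :
    f₂ = (lam⁻¹ • h) f₁ ∧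
    LinearIndependent K ![f₁, f₂, ξ] ∧
    (Module.finrank K V = 3 → Submodule.span K {f₁, f₂, ξ} = ⊤) ∧
    canonicalForm φ η g h lam f₁ f₁ = -1 ∧
    canonicalForm φ η g h lam f₂ f₂ = 1 ∧
    canonicalForm φ η g h lam ξ ξ = 1 ∧
    canonicalForm φ η g h lam f₁ f₂ = 0 ∧
    canonicalForm φ η g h lam f₁ ξ = 0 ∧
    canonicalForm φ η g h lam f₂ ξ = 0 ∧
    canonicalH φ h κ μ lam f₁ = (μ / 2 - 1) • f₁ + lam • f₂ ∧
    canonicalH φ h κ μ lam f₂ = -(lam • f₁) + (1 - μ / 2) • f₂ ∧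
    canonicalH φ h κ μ lam ξ = 0 := by
  obtain rfl : f₂ = φ f₁ := by rw [hf₁, hf₂, map_smul, H.phi_sub_phi heη]
  have hη : η f₁ = 0 := by simp [hf₁, heη, H.eta_phi]
  have hh : h f₁ = lam • φ f₁ := by
    rw [hf₂, hf₁, map_smul, map_sub_phi_of_anticommute hanti heig, smul_comm]
  have hg : g f₁ f₁ = 1 := by
    have two_ne : (2 : K) ≠ 0 := two_ne_zero
    simp only [hf₁, map_smul, LinearMap.smul_apply, smul_eq_mul, H.sub_phi_apply_self heη, hge]
    rw [← mul_assoc, ← sq, inv_pow, hs, mul_one, inv_mul_cancel₀ two_ne]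
  have hgφ : g (φ f₁) (φ f₁) = 1 := by simp [H.phi_apply_phi, hg, hη]
  have gt_f₁ := H.canonicalForm_of_h_eq (g := g) hlam hη hh
  have gt_f₂ := H.canonicalForm_phi_of_h_eq (g := g) hanti hlam hη hh
  have gt_ξ := H.canonicalForm_xi_right (g := g) (lam := lam) hhξ
  exact ⟨by simp [hh, hlam], H.linearIndependent_phi_xi hη hg,
    fun hdim ↦ H.span_phi_xi_eq_top hdim hη hg,
    by rw [gt_f₁, hg], by rw [gt_f₂, hgφ], by rw [gt_ξ, H.eta_xi],
    by rw [gt_f₂, H.apply_phi_self], by rw [gt_ξ, hη], by rw [gt_ξ, H.eta_phi],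
    H.canonicalH_of_h_eq hlam hlam_sq hη hh μ, H.canonicalH_phi_of_h_eq hanti hlam hlam_sq hη hh μ,
    H.canonicalH_xi hhξ μ⟩

end Field

/-- In the setting of the canonical paracontact structure induced on a
3-dimensional non-Sasakian contact metric `(κ, μ, ν)`-space, with `λ = √(1−κ)`,
`φ̃ = (1/λ)h`, `g̃ = (1/λ)g(·, φh·) + η⊗η`, `h̃ = (1/(2λ))((2−μ)φ∘h + 2(1−κ)φ)`, and a
`g`-unit `e ∈ ker η` with `he = λe`, the vectors `ẽ₁ = (e − φe)/√2`, `ẽ₂ = (e + φe)/√2`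
satisfy `ẽ₂ = φ̃ẽ₁`, form together with `ξ` a `g̃`-orthogonal basis with
`g̃(ẽ₁,ẽ₁) = −1`, `g̃(ẽ₂,ẽ₂) = 1`, `g̃(ξ,ξ) = 1`, and
`h̃ẽ₁ = (μ/2 − 1)ẽ₁ + λẽ₂`, `h̃ẽ₂ = −λẽ₁ + (1 − μ/2)ẽ₂`, `h̃ξ = 0`. -/
theorem matrix_of_h_tilde
    (V : Type*) [AddCommGroup V] [Module ℝ V] [FiniteDimensional ℝ V]
    (hdim : Module.finrank ℝ V = 3)
    (φ : V →ₗ[ℝ] V) (ξ : V) (η : V →ₗ[ℝ] ℝ)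
    (hηξ : η ξ = 1)
    (hφφ : ∀ x : V, φ (φ x) = -x + η x • ξ)
    (g : LinearMap.BilinForm ℝ V)
    (hgsymm : ∀ x y : V, g x y = g y x)
    (hgpos : ∀ x : V, x ≠ 0 → 0 < g x x)
    (hcompat : ∀ x y : V, g (φ x) (φ y) = g x y - η x * η y)
    (hgskew : ∀ x y : V, g x (φ y) = - g (φ x) y)
    (h : V →ₗ[ℝ] V)
    (hsa : ∀ x y : V, g (h x) y = g x (h y))
    (hanti : ∀ x : V, h (φ x) = - φ (h x))
    (hhξ : h ξ = 0)
    (κ : ℝ) (hκ : κ < 1)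
    (hh : ∀ x : V, h (h x) = (κ - 1) • φ (φ x))
    (μ : ℝ)
    (lam : ℝ) (hlam : lam = Real.sqrt (1 - κ))
    (φt : V →ₗ[ℝ] V) (hφt : ∀ x : V, φt x = lam⁻¹ • h x)
    (gt : V → V → ℝ)
    (hgt : ∀ x y : V, gt x y = lam⁻¹ * g x (φ (h y)) + η x * η y)
    (ht : V →ₗ[ℝ] V)
    (hht : ∀ x : V, ht x = (2 * lam)⁻¹ • ((2 - μ) • φ (h x) + (2 * (1 - κ)) • φ x))
    (e : V) (heη : η e = 0) (hge : g e e = 1) (heig : h e = lam • e)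
    (f₁ f₂ : V)
    (hf₁ : f₁ = (Real.sqrt 2)⁻¹ • (e - φ e))
    (hf₂ : f₂ = (Real.sqrt 2)⁻¹ • (e + φ e)) :
    f₂ = φt f₁ ∧
    LinearIndependent ℝ ![f₁, f₂, ξ] ∧
    Submodule.span ℝ {f₁, f₂, ξ} = ⊤ ∧
    gt f₁ f₁ = -1 ∧ gt f₂ f₂ = 1 ∧ gt ξ ξ = 1 ∧
    gt f₁ f₂ = 0 ∧ gt f₁ ξ = 0 ∧ gt f₂ ξ = 0 ∧
    ht f₁ = (μ / 2 - 1) • f₁ + lam • f₂ ∧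
    ht f₂ = -(lam • f₁) + (1 - μ / 2) • f₂ ∧
    ht ξ = 0 := by
  obtain rfl : φt = lam⁻¹ • h := LinearMap.ext hφt
  obtain rfl : gt = fun x y ↦ canonicalForm φ η g h lam x y := funext₂ hgt
  obtain rfl : ht = canonicalH φ h κ μ lam := LinearMap.ext hht
  have hlam₀ : lam ≠ 0 := by rw [hlam]; exact (Real.sqrt_pos.mpr (sub_pos.mpr hκ)).ne'
  have hlam_sq : lam ^ 2 = 1 - κ := by rw [hlam, Real.sq_sqrt (sub_pos.mpr hκ).le]
  have ⟨frame_eq, linInd, span_top, matrix⟩ := matrix_of_h_tilde_general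
    ⟨⟨hηξ, hφφ⟩, hgsymm, hcompat⟩ hanti hhξ hlam₀ hlam_sq μ heη hge heig
    (Real.sq_sqrt zero_le_two) hf₁ hf₂
  exact ⟨frame_eq, linInd, span_top hdim, matrix⟩
end
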